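/- Every nonempty weakly compact set K in a real Banach space X has Property (R): every crescent of K contains a farthest point of K. -/

import Mathlib

open Metric Set Pointwise

/-- The farthest distance map `r_K(x) = sup {‖z - x‖ : z ∈ K}`. -/
noncomputable def rFar {X : Type*} [NormedAddCommGroup X] (K : Set X) (x : X) : ℝ :=
  sSup ((fun z => ‖z - x‖) '' K)

/-- `Q_K(x)`: the set of points of `K` farthest from `x`. -/
def QFar {X : Type*} [NormedAddCommGroup X] (K : Set X) (x : X) : Set X :=
  {z ∈ K | ‖z - x‖ = rFar K x}

/-- `D(K)`: the set of points admitting a farthest point in `K`. -/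
def DFar {X : Type*} [NormedAddCommGroup X] (K : Set X) : Set X :=
  {x | (QFar K x).Nonempty}

/-- `b(K)`: the set of farthest points of `K`. -/
def farPoints {X : Type*} [NormedAddCommGroup X] (K : Set X) : Set X :=
  ⋃ x ∈ DFar K, QFar K x

/-- The crescent `C(K, x, α) = {z ∈ K : ‖z - x‖ > r_K(x) - α}`. -/
def crescent {X : Type*} [NormedAddCommGroup X] (K : Set X) (x : X) (α : ℝ) : Set X :=
  {z ∈ K | rFar K x - α < ‖z - x‖}

/-- Property (R): every crescent of `K` contains a farthest point of `K`. -/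
def PropR {X : Type*} [NormedAddCommGroup X] (K : Set X) : Prop :=
  ∀ (x : X) (α : ℝ), 0 < α → ∃ z ∈ crescent K x α, z ∈ farPoints K

/-- The weak topology `σ(X, X*)` on `X`. -/
def weakTop (X : Type*) [NormedAddCommGroup X] [NormedSpace ℝ X] : TopologicalSpace X :=
  TopologicalSpace.induced (fun x => fun f : X →L[ℝ] ℝ => f x) inferInstance

section helpers
variable {X : Type*} [NormedAddCommGroup X]

lemma rFar_bdd {K : Set X} {C : ℝ} (hC : ∀ z ∈ K, ‖z‖ ≤ C) (x : X) :
    BddAbove ((fun z => ‖z - x‖) '' K) := by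
  refine ⟨C + ‖x‖, ?_⟩
  rintro _ ⟨z, hz, rfl⟩
  have := norm_sub_le z x
  have := hC z hz
  simp only
  linarith

lemma le_rFar {K : Set X} {C : ℝ} (hC : ∀ z ∈ K, ‖z‖ ≤ C) (x : X) {z : X} (hz : z ∈ K) :
    ‖z - x‖ ≤ rFar K x :=
  le_csSup (rFar_bdd hC x) ⟨z, hz, rfl⟩

lemma rFar_le {K : Set X} (hne : K.Nonempty) (x : X) {a : ℝ} (h : ∀ z ∈ K, ‖z - x‖ ≤ a) :
    rFar K x ≤ a := by
  refine csSup_le (hne.image _) ?_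
  rintro _ ⟨z, hz, rfl⟩
  exact h z hz

lemma rFar_lip {K : Set X} (hne : K.Nonempty) {C : ℝ} (hC : ∀ z ∈ K, ‖z‖ ≤ C) (x y : X) :
    rFar K x ≤ rFar K y + ‖x - y‖ := by
  refine rFar_le hne x fun z hz => ?_
  have h1 := le_rFar hC y hz
  have h2 : ‖z - x‖ ≤ ‖z - y‖ + ‖y - x‖ := norm_sub_le_norm_sub_add_norm_sub z y x
  rw [norm_sub_rev y x] at h2
  linarith

lemma rFar_cont {K : Set X} (hne : K.Nonempty) {C : ℝ} (hC : ∀ z ∈ K, ‖z‖ ≤ C) :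
    Continuous (rFar K) := by
  refine (LipschitzWith.of_le_add_mul 1 fun x y => ?_).continuous
  have := rFar_lip hne hC x y
  rw [dist_eq_norm]
  simpa using this

variable [NormedSpace ℝ X]

lemma rFar_convex {K : Set X} (hne : K.Nonempty) {C : ℝ} (hC : ∀ z ∈ K, ‖z‖ ≤ C) :
    ConvexOn ℝ univ (rFar K) := by
  refine ⟨convex_univ, fun x _ y _ a b ha hb hab => ?_⟩
  refine rFar_le hne _ fun z hz => ?_
  have h1 := le_rFar hC x hz
  have h2 := le_rFar hC y hz
  have : z - (a • x + b • y) = a • (z - x) + b • (z - y) := by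
    have : z = a • z + b • z := by rw [← add_smul, hab, one_smul]
    rw [smul_sub, smul_sub]
    nth_rewrite 1 [this]
    abel
  rw [this]
  refine (norm_add_le _ _).trans ?_
  rw [norm_smul, norm_smul, Real.norm_of_nonneg ha, Real.norm_of_nonneg hb, smul_eq_mul,
    smul_eq_mul]
  gcongr

/-- A continuous convex function has a subgradient at each point. -/
lemma exists_subgrad {r : X → ℝ} (hc : Continuous r) (hr : ConvexOn ℝ univ r) (y : X) :
    ∃ f : X →L[ℝ] ℝ, ∀ w, r y + f (w - y) ≤ r w := by
  have hopen : IsOpen {p : X × ℝ | p.1 ∈ univ ∧ r p.1 < p.2} := by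
    simp only [mem_univ, true_and]
    exact isOpen_lt (hc.comp continuous_fst) continuous_snd
  obtain ⟨F, hF⟩ := geometric_hahn_banach_open_point (x := (y, r y)) hr.convex_strict_epigraph
    hopen (by simp)
  have hdec : ∀ w s, F (w, s) = F (w, 0) + s * F (0, 1) := by
    intro w s
    have : ((w, s) : X × ℝ) = (w, 0) + s • ((0, 1) : X × ℝ) := by simp
    rw [this, map_add, map_smul, smul_eq_mul]
  set c := F (0, 1) with hcdef
  have hlt : ∀ w s, r w < s → F (w, 0) + s * c < F (y, 0) + r y * c := by
    intro w s h
    rw [← hdec, ← hdec]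
    exact hF (w, s) ⟨mem_univ _, h⟩
  have hc0 : c < 0 := by
    have := hlt y (r y + 1) (by linarith)
    linarith
  refine ⟨(-c⁻¹) • (F.comp (ContinuousLinearMap.inl ℝ X ℝ)), fun w => ?_⟩
  have hsub : F (w - y, 0) = F (w, 0) - F (y, 0) := by
    rw [← map_sub]; simp
  simp only [smul_apply, ContinuousLinearMap.comp_apply,
    ContinuousLinearMap.inl_apply, smul_eq_mul, hsub]
  refine le_of_forall_gt_imp_ge_of_dense fun s hs => ?_
  have h := hlt w s hs
  have h2 : -c⁻¹ * (F (w, 0) - F (y, 0)) * c = -(F (w, 0) - F (y, 0)) := by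
    have hcne : c ≠ 0 := hc0.ne
    field_simp
  by_contra! hcon
  have := mul_lt_mul_of_neg_right hcon hc0
  rw [add_mul, h2] at this
  linarith

lemma weak_cont (f : X →L[ℝ] ℝ) : @Continuous X ℝ (weakTop X) _ f :=
  @Continuous.comp X ((X →L[ℝ] ℝ) → ℝ) ℝ (weakTop X) _ _ (fun x => fun g : X →L[ℝ] ℝ => g x)
    (fun φ => φ f) (continuous_apply (A := fun _ : X →L[ℝ] ℝ => ℝ) f) continuous_induced_dom

lemma weak_bdd {K : Set X} (hK : @IsCompact X (weakTop X) K) : ∃ C, ∀ z ∈ K, ‖z‖ ≤ C := by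
  have key : ∀ f : X →L[ℝ] ℝ, ∃ C, ∀ z : K, ‖NormedSpace.inclusionInDoubleDualLi ℝ z.1 f‖ ≤ C := by
    intro f
    have hf : @Continuous X ℝ (weakTop X) _ f := by
      exact weak_cont f
    have := @IsCompact.image X ℝ (weakTop X) _ K f hK hf
    obtain ⟨C, hC⟩ := this.isBounded.exists_norm_le
    exact ⟨C, fun z => hC _ ⟨z.1, z.2, rfl⟩⟩
  obtain ⟨C, hC⟩ := banach_steinhaus key
  refine ⟨C, fun z hz => ?_⟩
  have := hC ⟨z, hz⟩
  rwa [LinearIsometry.norm_map] at this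

lemma weak_min {K : Set X} (hne : K.Nonempty) (hK : @IsCompact X (weakTop X) K)
    (f : X →L[ℝ] ℝ) : ∃ z ∈ K, ∀ w ∈ K, f z ≤ f w := by
  have hf : @Continuous X ℝ (weakTop X) _ f := by
    exact weak_cont f
  have := @IsCompact.image X ℝ (weakTop X) _ K f hK hf
  obtain ⟨_, ⟨z, hz, rfl⟩, h⟩ := this.exists_isLeast (hne.image _)
  exact ⟨z, hz, fun w hw => h ⟨w, hw, rfl⟩⟩

/-- The open sets whose intersection lies in `D(K)`. -/
def goodSet (K : Set X) (ε : ℝ) : Set X :=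
  {y | ∃ z ∈ K, ∃ t : ℝ, 0 < t ∧ t * (rFar K y - ε) < rFar K y - rFar K (y + t • (z - y))}

lemma goodSet_open {K : Set X} (hr : Continuous (rFar K)) (ε : ℝ) : IsOpen (goodSet K ε) := by
  have : goodSet K ε = ⋃ z ∈ K, ⋃ t : ℝ, ⋃ _ : 0 < t,
      {y | t * (rFar K y - ε) < rFar K y - rFar K (y + t • (z - y))} := by
    ext y
    simp [goodSet]
  rw [this]
  refine isOpen_biUnion fun z _ => isOpen_iUnion fun t => isOpen_iUnion fun _ => ?_
  refine isOpen_lt (by fun_prop) ?_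
  exact hr.sub (hr.comp (by fun_prop))

lemma goodSet_dense {K : Set X} (hne : K.Nonempty) {C : ℝ} (hC : ∀ z ∈ K, ‖z‖ ≤ C)
    {ε : ℝ} (hε : 0 < ε) : Dense (goodSet K ε) := by
  rw [Metric.dense_iff]
  intro y₀ η hη
  set R := rFar K y₀ with hR
  have hR0 : 0 ≤ R := by
    obtain ⟨z, hz⟩ := hne
    exact (norm_nonneg _).trans (le_rFar hC y₀ hz)
  set l := η / (R + 1) with hl
  have hl0 : 0 < l := by positivity
  have hlη : l * (R + 1) = η := by rw [hl]; field_simp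
  have hδ : 0 < l * ε / (1 + l) := by positivity
  obtain ⟨_, ⟨z, hz, rfl⟩, hzlt⟩ := exists_lt_of_lt_csSup (hne.image (fun z => ‖z - y₀‖))
    (show R - l * ε / (1 + l) < _ by rw [hR]; exact sub_lt_self _ hδ)
  simp only at hzlt
  have hzR := le_rFar hC y₀ hz
  refine ⟨y₀ + l • (y₀ - z), ?_, z, hz, l / (1 + l), by positivity, ?_⟩
  · rw [mem_ball, dist_eq_norm, add_sub_cancel_left, norm_smul, Real.norm_of_nonneg hl0.le,
      norm_sub_rev]
    nlinarith
  · set y := y₀ + l • (y₀ - z) with hy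
    have h1 : z - y = (1 + l) • (z - y₀) := by rw [hy]; module
    have h2 : y + (l / (1 + l)) • (z - y) = y₀ := by
      rw [h1, smul_smul, div_mul_cancel₀ _ (by positivity), hy]; module
    rw [h2, ← hR]
    have h3 := le_rFar hC y hz
    rw [h1, norm_smul, Real.norm_of_nonneg (by positivity)] at h3
    have h4 : (1 + l) * (R - l * ε / (1 + l)) < (1 + l) * ‖z - y₀‖ := by gcongr
    have h5 : (1 + l) * (R - l * ε / (1 + l)) = (1 + l) * R - l * ε := by field_simp
    rw [div_mul_eq_mul_div, div_lt_iff₀ (by positivity)]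
    nlinarith

lemma DFar_of_good {K : Set X} (hne : K.Nonempty) (hK : @IsCompact X (weakTop X) K)
    {C : ℝ} (hC : ∀ z ∈ K, ‖z‖ ≤ C) {y : X} (hy : ∀ n : ℕ, y ∈ goodSet K (1 / ((n : ℝ) + 1))) :
    (QFar K y).Nonempty := by
  obtain ⟨f, hf⟩ := exists_subgrad (rFar_cont hne hC) (rFar_convex hne hC) y
  obtain ⟨z, hz, hmin⟩ := weak_min hne hK f
  refine ⟨z, hz, le_antisymm (le_rFar hC y hz) ?_⟩
  have hle : f (y - z) ≤ ‖z - y‖ := by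
    have h1 := hf (y + (y - z))
    have h2 := rFar_lip hne hC (y + (y - z)) y
    rw [add_sub_cancel_left] at h1 h2
    rw [norm_sub_rev]
    linarith
  refine le_trans ?_ hle
  refine le_of_forall_pos_le_add fun ε hε => ?_
  obtain ⟨n, hn⟩ := exists_nat_one_div_lt hε
  obtain ⟨w, hw, t, ht, hlt⟩ := hy n
  have h1 := hf (y + t • (w - y))
  rw [add_sub_cancel_left, map_smul, smul_eq_mul] at h1
  have h2 : t * (rFar K y - 1 / ((n : ℝ) + 1)) < t * (- f (w - y)) := by linarith
  have h3 := lt_of_mul_lt_mul_left h2 ht.le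
  have h4 := hmin w hw
  rw [map_sub] at h3 ⊢
  linarith

end helpers

/-- Every nonempty weakly compact set has Property (R). -/
theorem stmt_8 {X : Type*} [NormedAddCommGroup X] [NormedSpace ℝ X] [CompleteSpace X]
    (K : Set X) (hne : K.Nonempty) (hK : @IsCompact X (weakTop X) K) :
    PropR K := by
  obtain ⟨C, hC⟩ := weak_bdd hK
  intro x α hα
  have hd : Dense (⋂ n : ℕ, goodSet K (1 / ((n : ℝ) + 1))) :=
    dense_iInter_of_isOpen_nat (fun n => goodSet_open (rFar_cont hne hC) _)
      (fun n => goodSet_dense hne hC (by positivity))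
  obtain ⟨y, hyb, hy⟩ := Metric.dense_iff.1 hd x (α / 2) (by positivity)
  obtain ⟨z, hz⟩ := DFar_of_good hne hK hC (mem_iInter.1 hy)
  refine ⟨z, ⟨hz.1, ?_⟩, mem_iUnion₂.2 ⟨y, ⟨z, hz⟩, hz⟩⟩
  have h1 := rFar_lip hne hC x y
  have h2 : ‖z - y‖ ≤ ‖z - x‖ + ‖x - y‖ := norm_sub_le_norm_sub_add_norm_sub z x y
  have h3 := hz.2
  rw [mem_ball, dist_eq_norm, norm_sub_rev] at hyb
  linarith
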